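/- Let H ∈ (0, 3/4). There exists a constant C_H depending only on H such that for every integer n ≥ 1, Σ_{j=1}^n Σ_{k=1}^n β_{j,k}² ≤ C_H · n^{1−4H}. -/

import Mathlib

/-- The fBm autocorrelation sequence `ρ_H(k) = (1/2)(|k+1|^{2H} − 2|k|^{2H} + |k−1|^{2H})`. -/
noncomputable def rhoH (H : ℝ) (k : ℤ) : ℝ :=
  (1/2) * (|(k:ℝ) + 1| ^ (2 * H) - 2 * |(k:ℝ)| ^ (2 * H) + |(k:ℝ) - 1| ^ (2 * H))

theorem rhoH_bound (H : ℝ) (hH : H ∈ Set.Ioo (0:ℝ) (3/4)) (m : ℕ) :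
    |rhoH H ((m + 2 : ℕ) : ℤ)| ≤ ((m:ℝ) + 1) ^ (2 * H - 2) := by
  obtain ⟨h0, h1⟩ := hH
  have hm : (0:ℝ) ≤ m := Nat.cast_nonneg m
  obtain ⟨c, hc, hc'⟩ := exists_hasDerivAt_eq_slope
    (fun x : ℝ => (x + 1) ^ (2 * H) - x ^ (2 * H))
    (fun x : ℝ => 1 * (2 * H) * (x + 1) ^ (2 * H - 1) - 1 * (2 * H) * x ^ (2 * H - 1))
    (a := (m:ℝ) + 1) (b := (m:ℝ) + 2) (by linarith)
    (by
      apply ContinuousOn.sub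
      · exact ContinuousOn.rpow_const (by fun_prop) (fun x hx => Or.inr (by linarith))
      · exact ContinuousOn.rpow_const (by fun_prop) (fun x hx => Or.inr (by linarith)))
    (by
      intro x hx
      have hx1 := hx.1
      exact (((hasDerivAt_id x).add_const 1).rpow_const (Or.inl (by simp; linarith))).sub
        ((hasDerivAt_id x).rpow_const (Or.inl (by simp; linarith))))
  have hc1 := hc.1
  have hc2 := hc.2
  obtain ⟨d, hd, hd'⟩ := exists_hasDerivAt_eq_slope
    (fun x : ℝ => x ^ (2 * H - 1))
    (fun x : ℝ => 1 * (2 * H - 1) * x ^ (2 * H - 1 - 1))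
    (a := c) (b := c + 1) (by linarith)
    (by
      exact ContinuousOn.rpow_const (by fun_prop)
        (fun x hx => Or.inl (by have := hx.1; linarith)))
    (by
      intro x hx
      have hx1 := hx.1
      exact (hasDerivAt_id x).rpow_const (Or.inl (by simp; linarith)))
  have hd1 := hd.1
  have e : rhoH H ((m + 2 : ℕ) : ℤ) = H * (2 * H - 1) * d ^ (2 * H - 2) := by
    unfold rhoH
    have q1 : |(((m + 2 : ℕ) : ℤ) : ℝ) + 1| = (m:ℝ) + 2 + 1 := by
      push_cast; exact abs_of_nonneg (by linarith)
    have q2 : |(((m + 2 : ℕ) : ℤ) : ℝ)| = (m:ℝ) + 2 := by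
      push_cast; exact abs_of_nonneg (by linarith)
    have q3 : |(((m + 2 : ℕ) : ℤ) : ℝ) - 1| = (m:ℝ) + 1 := by
      push_cast; rw [abs_of_nonneg (by linarith)]; ring
    rw [q1, q2, q3]
    have r1 : (m:ℝ) + 2 - (m + 1) = 1 := by ring
    have r2 : c + 1 - c = 1 := by ring
    have r3 : (m:ℝ) + 1 + 1 = m + 2 := by ring
    have r4 : 2 * H - 1 - 1 = 2 * H - 2 := by ring
    simp only [r1, r3, div_one] at hc'
    simp only [r2, r4, div_one] at hd'
    linear_combination (-1/2) * hc' - H * hd'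
  have hdm : d ^ (2 * H - 2) ≤ ((m:ℝ) + 1) ^ (2 * H - 2) :=
    Real.rpow_le_rpow_of_nonpos (by linarith) (by linarith) (by linarith)
  have hdp : 0 ≤ d ^ (2 * H - 2) := Real.rpow_nonneg (by linarith) _
  have hab : |H * (2 * H - 1)| ≤ 1 := by
    rw [abs_le]; constructor <;> nlinarith
  rw [e, abs_mul, abs_of_nonneg hdp]
  nlinarith

theorem rhoH_neg (H : ℝ) (k : ℤ) : rhoH H (-k) = rhoH H k := by
  unfold rhoH
  have a1 : |((-k : ℤ) : ℝ) + 1| = |(k:ℝ) - 1| := by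
    rw [← abs_neg]; push_cast; congr 1; ring
  have a2 : |((-k : ℤ) : ℝ) - 1| = |(k:ℝ) + 1| := by
    rw [← abs_neg]; push_cast; congr 1; ring
  have a3 : |((-k : ℤ) : ℝ)| = |(k:ℝ)| := by
    push_cast; exact abs_neg _
  rw [a1, a2, a3]; ring

theorem rhoH_summable (H : ℝ) (hH : H ∈ Set.Ioo (0:ℝ) (3/4)) :
    Summable (fun k : ℤ => rhoH H k ^ 2) := by
  have hn : Summable (fun k : ℕ => rhoH H (k:ℤ) ^ 2) := by
    rw [← summable_nat_add_iff 2]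
    have hs : Summable (fun m : ℕ => ((m + 1 : ℕ) : ℝ) ^ (4 * H - 4)) :=
      (summable_nat_add_iff 1 (f := fun m : ℕ => (m:ℝ) ^ (4 * H - 4))).2
        (Real.summable_nat_rpow.2 (by linarith [hH.2]))
    refine Summable.of_nonneg_of_le (fun m => sq_nonneg _) (fun m => ?_) hs
    have hb := rhoH_bound H hH m
    have hm : (0:ℝ) ≤ (m:ℝ) + 1 := by positivity
    calc rhoH H ((m + 2 : ℕ) : ℤ) ^ 2 = |rhoH H ((m + 2 : ℕ) : ℤ)| ^ 2 := (sq_abs _).symm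
      _ ≤ (((m:ℝ) + 1) ^ (2 * H - 2)) ^ 2 := by gcongr
      _ = ((m + 1 : ℕ) : ℝ) ^ (4 * H - 4) := by
        rw [← Real.rpow_mul_natCast hm]
        push_cast; congr 1; ring
  refine Summable.of_nat_of_neg hn ?_
  simpa only [rhoH_neg] using hn

/-- Lemma 8 (d): for `H ∈ (0,3/4)` there is a constant `C_H` such that for all `n ≥ 1`,
`Σ_{j,k=1}^n β_{j,k}² ≤ C_H · n^{1−4H}`, where `β_{j,k} = n^{−2H} ρ_H(j−k)`. -/
theorem stmt10 (H : ℝ) (hH : H ∈ Set.Ioo (0:ℝ) (3/4)) :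
    ∃ C : ℝ, 0 < C ∧ ∀ n : ℕ, 1 ≤ n →
      (∑ j ∈ Finset.Icc 1 n, ∑ k ∈ Finset.Icc 1 n,
          ((n:ℝ) ^ (-(2 * H)) * rhoH H ((j:ℤ) - (k:ℤ))) ^ 2)
        ≤ C * (n:ℝ) ^ (1 - 4 * H) := by
  have hs := rhoH_summable H hH
  have hT : 0 ≤ ∑' k : ℤ, rhoH H k ^ 2 := tsum_nonneg (fun k => sq_nonneg _)
  refine ⟨(∑' k : ℤ, rhoH H k ^ 2) + 1, by linarith, fun n hn => ?_⟩
  have hn0 : (0:ℝ) < n := by exact_mod_cast hn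
  have hin : ∀ j : ℕ, ∑ k ∈ Finset.Icc 1 n, rhoH H ((j:ℤ) - (k:ℤ)) ^ 2
      ≤ ∑' k : ℤ, rhoH H k ^ 2 := by
    intro j
    have hinj : Function.Injective (fun k : ℕ => (j:ℤ) - (k:ℤ)) := by
      intro a b hab
      simp only at hab
      omega
    have := hs.sum_le_tsum ((Finset.Icc 1 n).map ⟨_, hinj⟩) (fun k _ => sq_nonneg _)
    simpa only [Finset.sum_map, Function.Embedding.coeFn_mk] using this
  have hpow : ((n:ℝ) ^ (-(2 * H))) ^ 2 * n = (n:ℝ) ^ (1 - 4 * H) := by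
    rw [← Real.rpow_mul_natCast hn0.le, ← Real.rpow_add_one hn0.ne']
    push_cast; congr 1; ring
  simp only [mul_pow, ← Finset.mul_sum]
  calc _ ≤ ((n:ℝ) ^ (-(2 * H))) ^ 2 *
        ∑ j ∈ Finset.Icc 1 n, ((∑' k : ℤ, rhoH H k ^ 2) + 1) := by
        gcongr with j hj
        linarith [hin j]
    _ = _ := by
        rw [Finset.sum_const, Nat.card_Icc, nsmul_eq_mul, ← hpow, Nat.add_sub_cancel]
        ring
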